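/- arXiv:2207.00825 — 2 statements merged into one kernel-verified Lean document; each statement's English description precedes it below -/
import Mathlib

section
/- Assume there is a constant K > 0 such that |Δ(x; b, 1)| ≤ K·x^{1/2}·log x for all integers b ≥ 1 and all x ≥ 2 (this bound holds under the Generalized Riemann Hypothesis). Then for every positive integer λ and every ε > 0 there is a constant C = C(a₁, a₂, λ, ε, K) > 0 such that |Σ_{p ≤ x, p prime} (log g_u(p−1))^λ − P_{u,λ}·π(x)| ≤ C·x^{(6λ+3)/(6λ+4)+ε} for all x ≥ 2, where P_{u,λ} := Σ_{n ≥ 1, gcd(n,a₂)=1} ρ_λ(n)/φ(ℓ(n)). -/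
open scoped BigOperators

/-- `gu u n = gcd(n, u n)`. -/
noncomputable def gu (u : ℕ → ℤ) (n : ℕ) : ℕ := Int.gcd (n : ℤ) (u n)

/-- Rank of appearance of `m` in the sequence `u`. -/
noncomputable def zu (u : ℕ → ℤ) (m : ℕ) : ℕ := sInf {n : ℕ | 0 < n ∧ (m : ℤ) ∣ u n}

/-- `ℓ(m) = lcm(m, z_u(m))`. -/
noncomputable def ellu (u : ℕ → ℤ) (m : ℕ) : ℕ := Nat.lcm m (zu u m)

/-- The arithmetic function `ρ_λ`. -/
noncomputable def rho (lam n : ℕ) : ℝ :=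
  (Nat.factorial lam : ℝ) *
    ∑ f ∈ (Fintype.piFinset fun _ : n.primeFactors => Finset.range (lam + 1)) |>.filter
        (fun f => ∑ p, f p = lam),
      ∏ p : n.primeFactors,
        (((n.factorization (p : ℕ) : ℝ) ^ f p - ((n.factorization (p : ℕ) : ℝ) - 1) ^ f p) *
          Real.log ((p : ℕ) : ℝ) ^ f p / (Nat.factorial (f p) : ℝ))

/-- The set of primes `≤ x`. -/
noncomputable def primesUpTo (x : ℝ) : Finset ℕ :=
  (Finset.range (⌊x⌋₊ + 1)).filter Nat.Prime

/-- `π(x)`, the number of primes `≤ x`. -/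
noncomputable def primePi (x : ℝ) : ℕ := (primesUpTo x).card

/-- `π(x; b, a)`, the number of primes `p ≤ x` with `p ≡ a (mod b)`. -/
noncomputable def primePiMod (x : ℝ) (b a : ℕ) : ℕ :=
  ((primesUpTo x).filter fun p => p % b = a % b).card

/-- `Δ(x; b, a) = π(x; b, a) - π(x)/φ(b)`. -/
noncomputable def chebErr (x : ℝ) (b a : ℕ) : ℝ :=
  (primePiMod x b a : ℝ) - (primePi x : ℝ) / (Nat.totient b : ℝ)

lemma aux_log_pow_le (k : ℕ) (η : ℝ) (hη : 0 < η) :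
    ∃ C : ℝ, 0 < C ∧ ∀ x : ℝ, 1 ≤ x → Real.log x ^ k ≤ C * x ^ η := by
  have hδ : 0 < η / (k + 1) := by positivity
  refine ⟨((η / (k + 1))⁻¹) ^ k, by positivity, fun x hx => ?_⟩
  have h1 : Real.log x ≤ x ^ (η / (k + 1)) / (η / (k + 1)) :=
    Real.log_le_rpow_div (by linarith) hδ
  have h0 : 0 ≤ Real.log x := Real.log_nonneg hx
  calc Real.log x ^ k ≤ (x ^ (η / (k + 1)) / (η / (k + 1))) ^ k := by gcongr
    _ = ((η / (k + 1))⁻¹) ^ k * (x ^ (η / (k + 1))) ^ k := by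
        rw [div_eq_inv_mul, mul_pow]
    _ = ((η / (k + 1))⁻¹) ^ k * x ^ (η / (k + 1) * k) := by
        rw [Real.rpow_mul_natCast (by linarith)]
    _ ≤ ((η / (k + 1))⁻¹) ^ k * x ^ η := by
        gcongr
        rw [div_mul_eq_mul_div, div_le_iff₀ (by positivity)]
        nlinarith

lemma aux_divisor_bound (η : ℝ) (hη : 0 < η) :
    ∃ C : ℝ, 0 < C ∧ ∀ n : ℕ, n ≠ 0 → (n.divisors.card : ℝ) ≤ C * (n : ℝ) ^ η := by
  set B : ℕ := ⌈(2 : ℝ) ^ (1 / η)⌉₊ with hB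
  have hl2 : 0 < Real.log 2 := Real.log_pos (by norm_num)
  set C' : ℝ := 1 + 1 / (η * Real.log 2) with hC'
  have hC'1 : 1 ≤ C' := by
    have : 0 < 1 / (η * Real.log 2) := by positivity
    linarith
  have hsmall : ∀ (p a : ℕ), 2 ≤ p → ((a : ℝ) + 1) ≤ C' * ((p : ℝ) ^ a) ^ η := by
    intro p a hp
    have h2 : (2 : ℝ) ≤ p := by exact_mod_cast hp
    have h3 : ((2 : ℝ) ^ a) ^ η ≤ ((p : ℝ) ^ a) ^ η := by gcongr
    have h4 : 1 + a * (η * Real.log 2) ≤ ((2 : ℝ) ^ a) ^ η := by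
      rw [Real.rpow_def_of_pos (by positivity), Real.log_pow]
      have := Real.add_one_le_exp (a * Real.log 2 * η)
      linarith
    have h5 : (a : ℝ) + 1 ≤ C' * (1 + a * (η * Real.log 2)) := by
      have h6 : C' * (1 + a * (η * Real.log 2)) =
          1 + 1 / (η * Real.log 2) + a * (η * Real.log 2) + a := by
        rw [hC']; field_simp; ring
      rw [h6]
      have : 0 < 1 / (η * Real.log 2) := by positivity
      have : 0 ≤ a * (η * Real.log 2) := by positivity
      linarith
    calc (a : ℝ) + 1 ≤ C' * (1 + a * (η * Real.log 2)) := h5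
      _ ≤ C' * ((p : ℝ) ^ a) ^ η := by gcongr; exact h4.trans h3
  have hbig : ∀ (p a : ℕ), B ≤ p → ((a : ℝ) + 1) ≤ ((p : ℝ) ^ a) ^ η := by
    intro p a hp
    have h1 : (2 : ℝ) ^ (1 / η) ≤ p := (Nat.le_ceil _).trans (by exact_mod_cast hp)
    have h2 : (2 : ℝ) ≤ (p : ℝ) ^ η := by
      calc (2 : ℝ) = ((2 : ℝ) ^ (1 / η)) ^ η := by
            rw [← Real.rpow_mul (by norm_num)]; field_simp; simp
        _ ≤ (p : ℝ) ^ η := by gcongr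
    have h3 : ((p : ℝ) ^ a) ^ η = ((p : ℝ) ^ η) ^ a := by
      rw [← Real.rpow_natCast_mul (by positivity), mul_comm, Real.rpow_mul_natCast (by positivity)]
    rw [h3]
    calc (a : ℝ) + 1 ≤ 2 ^ a := by exact_mod_cast Nat.lt_two_pow_self
      _ ≤ ((p : ℝ) ^ η) ^ a := by gcongr
  refine ⟨C' ^ B, by positivity, fun n hn => ?_⟩
  rw [Nat.card_divisors hn]
  push_cast
  calc ∏ p ∈ n.primeFactors, ((n.factorization p : ℝ) + 1)
      ≤ ∏ p ∈ n.primeFactors, ((if p < B then C' else 1) *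
          ((p : ℝ) ^ (n.factorization p)) ^ η) := by
        apply Finset.prod_le_prod
        · intros; positivity
        · intro p hp
          split_ifs with h
          · exact hsmall p _ (Nat.prime_of_mem_primeFactors hp).two_le
          · rw [one_mul]; exact hbig p _ (not_lt.mp h)
    _ = (∏ p ∈ n.primeFactors, (if p < B then C' else 1)) * (n : ℝ) ^ η := by
        rw [Finset.prod_mul_distrib, Real.finsetProd_rpow _ _ (by intros; positivity)]
        congr 2
        have := Nat.prod_primeFactors_coe_pow_factorization hn
        conv_rhs => rw [← Nat.prod_factorization_pow_eq_self hn]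
        simp [Finsupp.prod]
    _ ≤ C' ^ B * (n : ℝ) ^ η := by
        gcongr
        rw [← Finset.prod_filter, Finset.prod_const]
        apply pow_le_pow_right₀ hC'1
        calc _ ≤ (Finset.range B).card := Finset.card_le_card (by
              intro p hp; simp at hp; simpa using hp.2)
          _ = B := by simp

lemma aux_le_totient_mul (n : ℕ) : n ≤ n.divisors.card * n.totient := by
  rcases Nat.eq_zero_or_pos n with rfl | hn
  · simp
  conv_lhs => rw [← Nat.sum_totient n]
  rw [← smul_eq_mul]
  apply Finset.sum_le_card_nsmul
  intro d hd
  exact Nat.le_of_dvd (Nat.totient_pos.mpr hn) (Nat.totient_dvd_of_dvd (Nat.dvd_of_mem_divisors hd))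

lemma aux_totient_bound (η : ℝ) (hη : 0 < η) :
    ∃ C : ℝ, 0 < C ∧ ∀ n : ℕ, n ≠ 0 → 1 / (n.totient : ℝ) ≤ C * (n : ℝ) ^ (η - 1) := by
  obtain ⟨C, hC, h⟩ := aux_divisor_bound η hη
  refine ⟨C, hC, fun n hn => ?_⟩
  have hn' : (0 : ℝ) < n := by positivity
  have hp : (0 : ℝ) < n.totient := by exact_mod_cast Nat.totient_pos.mpr (Nat.pos_of_ne_zero hn)
  rw [div_le_iff₀ hp, Real.rpow_sub_one hn'.ne']
  have h1 : (n : ℝ) ≤ n.divisors.card * n.totient := by exact_mod_cast aux_le_totient_mul n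
  have h2 := h n hn
  rw [mul_div_assoc', div_mul_eq_mul_div, le_div_iff₀ hn', one_mul]
  exact h1.trans (by gcongr)

/-- The exponential series `exp (c X)`. -/
noncomputable def auxE (c : ℝ) : PowerSeries ℝ := PowerSeries.rescale c (PowerSeries.exp ℝ)

lemma auxE_coeff (c : ℝ) (k : ℕ) :
    PowerSeries.coeff k (auxE c) = c ^ k / (Nat.factorial k : ℝ) := by
  simp [auxE, PowerSeries.coeff_rescale, PowerSeries.coeff_exp, div_eq_mul_inv]

lemma auxE_add (a b : ℝ) : auxE (a + b) = auxE a * auxE b :=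
  (PowerSeries.exp_mul_exp_eq_exp_add a b).symm

lemma auxE_zero : auxE 0 = 1 := by
  simp [auxE, PowerSeries.rescale_zero]

/-- Generating series of `rho`. -/
noncomputable def auxF : ArithmeticFunction (PowerSeries ℝ) :=
  ⟨fun n => if n = 0 then 0 else ∏ p ∈ n.primeFactors,
    (auxE ((n.factorization p : ℝ) * Real.log p) -
      auxE (((n.factorization p : ℝ) - 1) * Real.log p)), by simp⟩

/-- Exponential series of `log n`. -/
noncomputable def auxG : ArithmeticFunction (PowerSeries ℝ) :=
  ⟨fun n => if n = 0 then 0 else auxE (Real.log n), by simp⟩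

lemma auxF_apply {n : ℕ} (hn : n ≠ 0) : auxF n = ∏ p ∈ n.primeFactors,
    (auxE ((n.factorization p : ℝ) * Real.log p) -
      auxE (((n.factorization p : ℝ) - 1) * Real.log p)) := by
  simp [auxF, hn]

lemma auxG_apply {n : ℕ} (hn : n ≠ 0) : auxG n = auxE (Real.log n) := by
  simp [auxG, hn]

lemma auxF_mult : auxF.IsMultiplicative := by
  rw [ArithmeticFunction.IsMultiplicative.iff_ne_zero]
  refine ⟨by simp [auxF], ?_⟩
  intro m n hm hn hmn
  rw [auxF_apply hm, auxF_apply hn, auxF_apply (mul_ne_zero hm hn),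
    Nat.Coprime.primeFactors_mul hmn,
    Finset.prod_union hmn.disjoint_primeFactors]
  congr 1
  · apply Finset.prod_congr rfl
    intro p hp
    rw [Nat.factorization_eq_of_coprime_left hmn (by simpa using hp)]
  · apply Finset.prod_congr rfl
    intro p hp
    rw [Nat.factorization_eq_of_coprime_right hmn (by simpa using hp)]

lemma auxG_mult : auxG.IsMultiplicative := by
  rw [ArithmeticFunction.IsMultiplicative.iff_ne_zero]
  refine ⟨by simp [auxG, auxE_zero], ?_⟩
  intro m n hm hn hmn
  rw [auxG_apply hm, auxG_apply hn, auxG_apply (mul_ne_zero hm hn)]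
  push_cast
  rw [Real.log_mul (by positivity) (by positivity), auxE_add]

lemma auxF_prime_pow {p : ℕ} (hp : p.Prime) (k : ℕ) :
    auxF (p ^ (k + 1)) = auxE (((k + 1 : ℕ) : ℝ) * Real.log p) - auxE ((k : ℝ) * Real.log p) := by
  rw [auxF_apply (pow_ne_zero _ hp.ne_zero), Nat.primeFactors_prime_pow (Nat.succ_ne_zero k) hp]
  simp [hp.factorization_self]

lemma auxF_sum (n : ℕ) (hn : n ≠ 0) : ∑ d ∈ n.divisors, auxF d = auxE (Real.log n) := by
  have hmain : (ArithmeticFunction.zeta : ArithmeticFunction (PowerSeries ℝ)) * auxF = auxG := by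
    rw [ArithmeticFunction.IsMultiplicative.eq_iff_eq_on_prime_powers _
      (ArithmeticFunction.isMultiplicative_zeta.natCast.mul auxF_mult) _ auxG_mult]
    intro p i hp
    rw [ArithmeticFunction.coe_zeta_mul_apply, auxG_apply (pow_ne_zero _ hp.ne_zero),
      Nat.sum_divisors_prime_pow hp]
    push_cast
    rw [Real.log_pow]
    induction i with
    | zero => simp [auxF_mult.map_one, auxE_zero]
    | succ k ih =>
      rw [Finset.sum_range_succ, ih, auxF_prime_pow hp]
      ring
  rw [← auxG_apply hn, ← hmain, ArithmeticFunction.coe_zeta_mul_apply]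

lemma aux_rho_eq (lam n : ℕ) (hn : n ≠ 0) :
    rho lam n = (Nat.factorial lam : ℝ) * PowerSeries.coeff lam (auxF n) := by
  classical
  rw [auxF_apply hn, rho, ← Finset.prod_coe_sort n.primeFactors, PowerSeries.coeff_prod]
  congr 1
  refine Finset.sum_bij' (fun f _ => Finsupp.equivFunOnFinite.symm f) (fun g _ => ⇑g)
    ?_ ?_ ?_ ?_ ?_
  · intro f hf
    simp only [Finset.mem_filter] at hf
    simpa [Finset.mem_finsuppAntidiag] using hf.2
  · intro g hg
    simp only [Finset.mem_finsuppAntidiag] at hg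
    simp only [Finset.mem_filter, Fintype.mem_piFinset, Finset.mem_range]
    refine ⟨fun a => ?_, hg.1⟩
    rw [Nat.lt_succ_iff, ← hg.1]
    exact Finset.single_le_sum (f := fun i => g i) (fun _ _ => Nat.zero_le _) (Finset.mem_univ a)
  · intros; simp
  · intros; simp
  · intro f hf
    apply Finset.prod_congr rfl
    intro p _
    simp only [map_sub, auxE_coeff, Finsupp.equivFunOnFinite_symm_apply_apply, mul_pow]
    ring

lemma aux_rho_sum (lam n : ℕ) (hn : n ≠ 0) :
    ∑ d ∈ n.divisors, rho lam d = Real.log n ^ lam := by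
  have h := congrArg (PowerSeries.coeff lam) (auxF_sum n hn)
  rw [map_sum, auxE_coeff] at h
  rw [Finset.sum_congr rfl (fun d hd => aux_rho_eq lam d (Nat.pos_of_mem_divisors hd).ne'),
    ← Finset.mul_sum, h]
  have : (Nat.factorial lam : ℝ) ≠ 0 := by positivity
  field_simp

lemma aux_rho_nonneg (lam n : ℕ) : 0 ≤ rho lam n := by
  unfold rho
  refine mul_nonneg (by positivity) (Finset.sum_nonneg fun f _ => Finset.prod_nonneg fun p _ => ?_)
  have hp := p.2
  have h1 : 1 ≤ n.factorization p := by
    have := Nat.prime_of_mem_primeFactors hp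
    exact (this.dvd_iff_one_le_factorization (Nat.mem_primeFactors.mp hp).2.2).mp
      (Nat.dvd_of_mem_primeFactors hp)
  have h1' : (1 : ℝ) ≤ n.factorization p := by exact_mod_cast h1
  have h2 : ((n.factorization p : ℝ) - 1) ^ f p ≤ (n.factorization p : ℝ) ^ f p :=
    pow_le_pow_left₀ (by linarith) (by linarith) _
  have h3 : 0 ≤ Real.log (p : ℕ) := Real.log_natCast_nonneg _
  have h4 : 0 ≤ (n.factorization p : ℝ) ^ f p - ((n.factorization p : ℝ) - 1) ^ f p := by linarith
  positivity

lemma aux_rho_le (lam n : ℕ) (hn : n ≠ 0) : rho lam n ≤ Real.log n ^ lam := by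
  rw [← aux_rho_sum lam n hn]
  exact Finset.single_le_sum (fun d _ => aux_rho_nonneg lam d) (Nat.mem_divisors_self n hn)

lemma aux_rho_card (lam n : ℕ) (h : rho lam n ≠ 0) : n.primeFactors.card ≤ lam := by
  by_contra hlt
  push Not at hlt
  apply h
  unfold rho
  rw [Finset.sum_eq_zero, mul_zero]
  intro f hf
  simp only [Finset.mem_filter] at hf
  obtain ⟨p, hp⟩ : ∃ p, f p = 0 := by
    by_contra hne
    push Not at hne
    have : ∑ p : n.primeFactors, 1 ≤ ∑ p, f p :=
      Finset.sum_le_sum fun p _ => Nat.one_le_iff_ne_zero.mpr (hne p)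
    rw [hf.2] at this
    simp at this
    omega
  apply Finset.prod_eq_zero (Finset.mem_univ p)
  simp [hp]

lemma aux_rho_one (lam : ℕ) (hlam : 0 < lam) : rho lam 1 = 0 := by
  have h := aux_rho_sum lam 1 one_ne_zero
  simpa [hlam.ne'] using h

lemma auxu_add (a₁ a₂ : ℤ) (u : ℕ → ℤ) (hu0 : u 0 = 0) (hu1 : u 1 = 1)
    (hrec : ∀ n : ℕ, u (n + 2) = a₁ * u (n + 1) + a₂ * u n) (m k : ℕ) :
    u (m + k + 1) = u (m + 1) * u (k + 1) + a₂ * u m * u k := by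
  have h : ∀ k : ℕ, u (m + k + 1) = u (m + 1) * u (k + 1) + a₂ * u m * u k ∧
      u (m + k + 2) = u (m + 1) * u (k + 2) + a₂ * u m * u (k + 1) := by
    intro k
    induction k with
    | zero =>
      refine ⟨by simp [hu0, hu1], ?_⟩
      have h1 := hrec m
      have h2 := hrec 0
      simp only [zero_add, hu0, hu1] at h2
      simp only [add_zero, zero_add, h1, h2, hu1]
      ring
    | succ j ih =>
      refine ⟨ih.2, ?_⟩
      have h1 := hrec (m + j + 1)
      have h2 := hrec (j + 1)
      have h3 := hrec j
      rw [show m + (j + 1) + 2 = m + j + 1 + 2 by ring, h1,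
        show m + j + 1 + 1 = m + j + 2 by ring, ih.1, ih.2, h2,
        show j + 1 + 1 = j + 2 by ring, h3]
      ring
  exact (h k).1

lemma auxu_cop_a (a₁ a₂ : ℤ) (hcop : IsCoprime a₁ a₂) (u : ℕ → ℤ) (hu1 : u 1 = 1)
    (hrec : ∀ n : ℕ, u (n + 2) = a₁ * u (n + 1) + a₂ * u n) (n : ℕ) :
    IsCoprime (u (n + 1)) a₂ := by
  induction n with
  | zero => simp [hu1, isCoprime_one_left]
  | succ k ih =>
    rw [show k + 1 + 1 = k + 2 by ring, hrec k]
    exact IsCoprime.add_mul_left_left (hcop.mul_left ih) (u k)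

lemma auxu_cop_succ (a₁ a₂ : ℤ) (hcop : IsCoprime a₁ a₂) (u : ℕ → ℤ) (hu1 : u 1 = 1)
    (hrec : ∀ n : ℕ, u (n + 2) = a₁ * u (n + 1) + a₂ * u n) (n : ℕ) :
    IsCoprime (u n) (u (n + 1)) := by
  induction n with
  | zero => simp [hu1, isCoprime_one_right]
  | succ k ih =>
    rw [show k + 1 + 1 = k + 2 by ring, hrec k, add_comm (a₁ * _), mul_comm a₁]
    exact IsCoprime.add_mul_left_right
      ((auxu_cop_a a₁ a₂ hcop u hu1 hrec k).mul_right ih.symm) a₁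

lemma auxu_binet (a₁ a₂ : ℤ) (u : ℕ → ℤ) (hu0 : u 0 = 0) (hu1 : u 1 = 1)
    (hrec : ∀ n : ℕ, u (n + 2) = a₁ * u (n + 1) + a₂ * u n) {F : Type*} [CommRing F]
    (α β : F) (hα : α ^ 2 = a₁ * α + a₂) (hβ : β ^ 2 = a₁ * β + a₂) (n : ℕ) :
    (α - β) * (u n : F) = α ^ n - β ^ n := by
  have h : ∀ n : ℕ, (α - β) * (u n : F) = α ^ n - β ^ n ∧
      (α - β) * (u (n + 1) : F) = α ^ (n + 1) - β ^ (n + 1) := by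
    intro n
    induction n with
    | zero => simp [hu0, hu1]
    | succ k ih =>
      refine ⟨ih.2, ?_⟩
      rw [show k + 1 + 1 = k + 2 by ring, hrec k]
      push_cast
      have e1 : α ^ (k + 2) = a₁ * α ^ (k + 1) + a₂ * α ^ k := by
        rw [pow_add, hα]; ring
      have e2 : β ^ (k + 2) = a₁ * β ^ (k + 1) + a₂ * β ^ k := by
        rw [pow_add, hβ]; ring
      rw [e1, e2]
      linear_combination (a₁ : F) * ih.2 + (a₂ : F) * ih.1
  exact (h n).1

lemma auxu_roots (a₁ a₂ : ℤ) {F : Type*} [Field F] [IsAlgClosed F] :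
    ∃ α β : F, α ^ 2 = a₁ * α + a₂ ∧ β ^ 2 = a₁ * β + a₂ ∧
      (α - β) ^ 2 = ((a₁ ^ 2 + 4 * a₂ : ℤ) : F) := by
  obtain ⟨α, hα⟩ : ∃ α : F, α ^ 2 = a₁ * α + a₂ := by
    obtain ⟨x, hx⟩ := IsAlgClosed.exists_root
      (Polynomial.X ^ 2 - (Polynomial.C (a₁ : F) * Polynomial.X + Polynomial.C (a₂ : F))) (by
        have : (Polynomial.X ^ 2 - (Polynomial.C (a₁ : F) * Polynomial.X +
          Polynomial.C (a₂ : F))).degree = 2 := by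
          compute_degree!
        rw [this]; norm_num)
    refine ⟨x, ?_⟩
    simp only [Polynomial.IsRoot, Polynomial.eval_sub, Polynomial.eval_add, Polynomial.eval_mul,
      Polynomial.eval_pow, Polynomial.eval_X, Polynomial.eval_C] at hx
    exact sub_eq_zero.mp hx
  refine ⟨α, a₁ - α, hα, ?_, ?_⟩
  · linear_combination hα
  · push_cast
    linear_combination 4 * hα

lemma auxu_ne_zero (a₁ a₂ : ℤ) (ha₂ : a₂ ≠ 0) (hΔ : a₁ ^ 2 + 4 * a₂ ≠ 0)
    (u : ℕ → ℤ) (hu0 : u 0 = 0) (hu1 : u 1 = 1)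
    (hrec : ∀ n : ℕ, u (n + 2) = a₁ * u (n + 1) + a₂ * u n)
    (hnd : ∀ α β : ℂ, α ^ 2 = (a₁ : ℂ) * α + (a₂ : ℂ) →
      β ^ 2 = (a₁ : ℂ) * β + (a₂ : ℂ) → α ≠ β → ∀ k : ℕ, 0 < k → (α / β) ^ k ≠ 1)
    (n : ℕ) (hn : 0 < n) : u n ≠ 0 := by
  obtain ⟨α, β, hα, hβ, h⟩ := auxu_roots a₁ a₂ (F := ℂ)
  intro h0
  have hne : α ≠ β := by
    rintro rfl
    simp only [sub_self, ne_eq, OfNat.ofNat_ne_zero, not_false_eq_true, zero_pow] at h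
    exact hΔ (by exact_mod_cast h.symm)
  have hβ0 : β ≠ 0 := by
    rintro rfl
    simp at hβ
    exact ha₂ (by exact_mod_cast hβ.symm)
  have := auxu_binet a₁ a₂ u hu0 hu1 hrec α β hα hβ n
  rw [h0] at this
  refine hnd α β hα hβ hne n hn ?_
  rw [div_pow, div_eq_one_iff_eq (pow_ne_zero _ hβ0)]
  simp at this
  linear_combination -this

lemma auxu_dvd_mul_p (a₁ a₂ : ℤ) (u : ℕ → ℤ) (hu0 : u 0 = 0) (hu1 : u 1 = 1)
    (hrec : ∀ n : ℕ, u (n + 2) = a₁ * u (n + 1) + a₂ * u n) (p : ℕ) (hp : p.Prime)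
    (hpΔ : ¬ (p : ℤ) ∣ a₁ ^ 2 + 4 * a₂) (k : ℕ) (h : (p : ℤ) ∣ u (p * k)) : (p : ℤ) ∣ u k := by
  have : Fact p.Prime := ⟨hp⟩
  obtain ⟨α, β, hα, hβ, hd⟩ := auxu_roots a₁ a₂ (F := AlgebraicClosure (ZMod p))
  have : CharP (AlgebraicClosure (ZMod p)) p := inferInstance
  have hcast : ∀ z : ℤ, (z : AlgebraicClosure (ZMod p)) = 0 ↔ (p : ℤ) ∣ z := fun z =>
    CharP.intCast_eq_zero_iff _ p z
  have hne : α - β ≠ 0 := by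
    intro h0
    rw [h0] at hd
    exact hpΔ ((hcast _).mp (by rw [← hd]; simp))
  have h1 := auxu_binet a₁ a₂ u hu0 hu1 hrec α β hα hβ (p * k)
  rw [(hcast _).mpr h, mul_zero, mul_comm p k, pow_mul, pow_mul, ← sub_pow_char] at h1
  have h2 : α ^ k - β ^ k = 0 := by
    by_contra hh
    exact pow_ne_zero p hh h1.symm
  rw [← auxu_binet a₁ a₂ u hu0 hu1 hrec α β hα hβ k] at h2
  exact (hcast _).mp ((mul_eq_zero.mp h2).resolve_left hne)

lemma auxu_dvd_shift (a₁ a₂ : ℤ) (hcop : IsCoprime a₁ a₂)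
    (u : ℕ → ℤ) (hu0 : u 0 = 0) (hu1 : u 1 = 1)
    (hrec : ∀ n : ℕ, u (n + 2) = a₁ * u (n + 1) + a₂ * u n)
    (d z : ℕ) (hz : (d : ℤ) ∣ u z) (k : ℕ) : (d : ℤ) ∣ u (k + z) ↔ (d : ℤ) ∣ u k := by
  rcases k with _ | j
  · simp [hz, hu0]
  · rw [show j + 1 + z = z + j + 1 by ring, auxu_add a₁ a₂ u hu0 hu1 hrec z j,
      dvd_add_left (Dvd.dvd.mul_right (Dvd.dvd.mul_left hz a₂) _)]
    have hc : IsCoprime (d : ℤ) (u (z + 1)) :=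
      (auxu_cop_succ a₁ a₂ hcop u hu1 hrec z).of_isCoprime_of_dvd_left hz
    exact ⟨fun h => hc.dvd_of_dvd_mul_left h, fun h => Dvd.dvd.mul_left h _⟩

lemma auxu_dvd_iff (a₁ a₂ : ℤ) (hcop : IsCoprime a₁ a₂)
    (u : ℕ → ℤ) (hu0 : u 0 = 0) (hu1 : u 1 = 1)
    (hrec : ∀ n : ℕ, u (n + 2) = a₁ * u (n + 1) + a₂ * u n)
    (d n : ℕ) : (d : ℤ) ∣ u n ↔ zu u d ∣ n := by
  rcases Set.eq_empty_or_nonempty {n : ℕ | 0 < n ∧ (d : ℤ) ∣ u n} with he | hne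
  · have hz : zu u d = 0 := by rw [zu, he]; simp
    rw [hz, zero_dvd_iff]
    constructor
    · intro h
      by_contra hn
      have : n ∈ {n : ℕ | 0 < n ∧ (d : ℤ) ∣ u n} := ⟨Nat.pos_of_ne_zero hn, h⟩
      rw [he] at this
      exact this
    · rintro rfl; simp [hu0]
  · have hmem : zu u d ∈ {n : ℕ | 0 < n ∧ (d : ℤ) ∣ u n} := Nat.sInf_mem hne
    obtain ⟨hpos, hdz⟩ := hmem
    have hk : ∀ k r : ℕ, (d : ℤ) ∣ u (r + k * zu u d) ↔ (d : ℤ) ∣ u r := by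
      intro k r
      induction k with
      | zero => simp
      | succ k ih =>
        rw [← ih, add_one_mul, ← add_assoc]
        exact auxu_dvd_shift a₁ a₂ hcop u hu0 hu1 hrec d _ hdz _
    have h1 := hk (n / zu u d) (n % zu u d)
    rw [mul_comm, Nat.mod_add_div] at h1
    rw [h1]
    constructor
    · intro h
      by_contra hn
      have hr : 0 < n % zu u d := Nat.pos_of_ne_zero fun h0 => hn (Nat.dvd_of_mod_eq_zero h0)
      have : zu u d ≤ n % zu u d := Nat.sInf_le ⟨hr, h⟩
      exact absurd (Nat.mod_lt n hpos) (by omega)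
    · intro h
      rw [Nat.mod_eq_zero_of_dvd h]; simp [hu0]

lemma auxu_growth (a₁ a₂ : ℤ) (u : ℕ → ℤ) (hu0 : u 0 = 0) (hu1 : u 1 = 1)
    (hrec : ∀ n : ℕ, u (n + 2) = a₁ * u (n + 1) + a₂ * u n) (n : ℕ) :
    |u n| ≤ (|a₁| + |a₂| + 1) ^ n := by
  have hA : 1 ≤ |a₁| + |a₂| + 1 := by have := abs_nonneg a₁; have := abs_nonneg a₂; linarith
  have h : ∀ n : ℕ, |u n| ≤ (|a₁| + |a₂| + 1) ^ n ∧ |u (n + 1)| ≤ (|a₁| + |a₂| + 1) ^ (n + 1) := by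
    intro n
    induction n with
    | zero => simp [hu0, hu1]; positivity
    | succ k ih =>
      refine ⟨ih.2, ?_⟩
      rw [show k + 1 + 1 = k + 2 by ring, hrec k]
      have h3 : (|a₁| + |a₂| + 1) ^ k ≤ (|a₁| + |a₂| + 1) ^ (k + 1) :=
        pow_le_pow_right₀ hA (by omega)
      calc |a₁ * u (k + 1) + a₂ * u k| ≤ |a₁| * |u (k + 1)| + |a₂| * |u k| := by
            rw [← abs_mul, ← abs_mul]; exact abs_add_le _ _
        _ ≤ |a₁| * (|a₁| + |a₂| + 1) ^ (k + 1) + |a₂| * (|a₁| + |a₂| + 1) ^ (k + 1) := by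
            gcongr
            · exact ih.2
            · exact ih.1.trans h3
        _ ≤ (|a₁| + |a₂| + 1) ^ (k + 2) := by
            rw [pow_succ _ (k + 1)]
            nlinarith [pow_pos (lt_of_lt_of_le one_pos hA) (k + 1)]
  exact (h n).1

/-- Reduced rank of appearance of a prime. -/
lemma aux_exists_w (a₁ a₂ : ℤ) (hcop : IsCoprime a₁ a₂) (ha₂ : a₂ ≠ 0)
    (hΔ : a₁ ^ 2 + 4 * a₂ ≠ 0)
    (u : ℕ → ℤ) (hu0 : u 0 = 0) (hu1 : u 1 = 1)
    (hrec : ∀ n : ℕ, u (n + 2) = a₁ * u (n + 1) + a₂ * u n)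
    (hnd : ∀ α β : ℂ, α ^ 2 = (a₁ : ℂ) * α + (a₂ : ℂ) →
      β ^ 2 = (a₁ : ℂ) * β + (a₂ : ℂ) → α ≠ β → ∀ k : ℕ, 0 < k → (α / β) ^ k ≠ 1) :
    ∃ w : ℕ → ℕ, (∀ p d : ℕ, p.Prime → p ∣ d → w p ∣ zu u d) ∧
      (∀ p : ℕ, p.Prime → w p ≠ 0 → ¬ p ∣ w p) ∧
      ∃ B : ℝ, 0 < B ∧ ∀ n : ℕ, 0 < n → ∀ s : Finset ℕ,
        (∀ p ∈ s, p.Prime ∧ w p = n) → (s.card : ℝ) ≤ B * n := by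
  have hdvd := auxu_dvd_iff a₁ a₂ hcop u hu0 hu1 hrec
  refine ⟨fun p => if (p : ℤ) ∣ a₁ ^ 2 + 4 * a₂ then 1 else zu u p, ?_, ?_, ?_⟩
  · intro p d hp hpd
    dsimp only
    split_ifs with h
    · exact one_dvd _
    · rw [← hdvd]
      have : (d : ℤ) ∣ u (zu u d) := (hdvd _ _).mpr dvd_rfl
      exact (Int.natCast_dvd_natCast.mpr hpd).trans this
  · intro p hp
    dsimp only
    split_ifs with h
    · intro _ h1; exact hp.one_lt.ne' (Nat.dvd_one.mp h1)
    · intro h0 hpz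
      obtain ⟨k, hk⟩ := hpz
      have h1 : (p : ℤ) ∣ u (p * k) := by rw [hdvd, hk]
      have h2 := auxu_dvd_mul_p a₁ a₂ u hu0 hu1 hrec p hp h k h1
      rw [hdvd] at h2
      have hk0 : 0 < k := Nat.pos_of_ne_zero (by rintro rfl; simp at hk; exact h0 hk)
      have := Nat.le_of_dvd hk0 h2
      rw [hk] at this
      nlinarith [hp.two_le]
  · set A : ℕ := (|a₁| + |a₂| + 1).natAbs with hA
    have hAz : (A : ℤ) = |a₁| + |a₂| + 1 := by
      rw [hA, Int.natCast_natAbs, abs_of_nonneg (by positivity)]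
    set D : ℕ := (a₁ ^ 2 + 4 * a₂).natAbs with hD
    have hD0 : D ≠ 0 := by rw [hD]; exact Int.natAbs_ne_zero.mpr hΔ
    refine ⟨(A + D : ℕ), by positivity, ?_⟩
    intro n hn s hs
    have hun := auxu_ne_zero a₁ a₂ ha₂ hΔ u hu0 hu1 hrec hnd n hn
    have hsub : s ⊆ ((u n).natAbs * D).primeFactors := by
      intro p hp
      obtain ⟨hpp, hw⟩ := hs p hp
      rw [Nat.mem_primeFactors]
      refine ⟨hpp, ?_, mul_ne_zero (Int.natAbs_ne_zero.mpr hun) hD0⟩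
      dsimp only at hw
      split_ifs at hw with h
      · exact Dvd.dvd.mul_left (Int.natCast_dvd.mp h) _
      · apply Dvd.dvd.mul_right
        rw [← Int.natCast_dvd, hdvd, hw]
    have hN0 : (u n).natAbs * D ≠ 0 := mul_ne_zero (Int.natAbs_ne_zero.mpr hun) hD0
    have h2 : 2 ^ s.card ≤ (u n).natAbs * D := by
      calc 2 ^ s.card ≤ 2 ^ ((u n).natAbs * D).primeFactors.card :=
            Nat.pow_le_pow_right (by norm_num) (Finset.card_le_card hsub)
        _ ≤ ∏ p ∈ ((u n).natAbs * D).primeFactors, p := by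
            apply Finset.pow_card_le_prod
            intro p hp
            exact (Nat.prime_of_mem_primeFactors hp).two_le
        _ ≤ (u n).natAbs * D := Nat.le_of_dvd (Nat.pos_of_ne_zero hN0) (Nat.prod_primeFactors_dvd _)
    have h3 : (u n).natAbs ≤ A ^ n := by
      have := auxu_growth a₁ a₂ u hu0 hu1 hrec n
      rw [← hAz] at this
      zify
      exact this
    have h4 : 2 ^ s.card ≤ 2 ^ ((A + D) * n) := by
      calc 2 ^ s.card ≤ (u n).natAbs * D := h2
        _ ≤ A ^ n * D := by gcongr
        _ ≤ (2 ^ A) ^ n * 2 ^ D := by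
            gcongr <;> exact Nat.lt_two_pow_self.le
        _ = 2 ^ (A * n + D) := by rw [← pow_mul, ← pow_add]
        _ ≤ 2 ^ ((A + D) * n) := by
            apply Nat.pow_le_pow_right (by norm_num)
            nlinarith
    have h5 := (Nat.pow_le_pow_iff_right (by norm_num : 1 < 2)).mp h4
    exact_mod_cast h5

lemma aux_decomp (u : ℕ → ℤ) (w : ℕ → ℕ)
    (hw1 : ∀ p d : ℕ, p.Prime → p ∣ d → w p ∣ zu u d)
    (hw2 : ∀ p : ℕ, p.Prime → w p ≠ 0 → ¬ p ∣ w p)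
    (lam : ℕ) (hlam : 0 < lam) (d : ℕ) (hd : 0 < d) (hr : rho lam d ≠ 0) (hl : ellu u d ≠ 0) :
    ∃ P h g m : ℕ, P.Prime ∧ 1 ≤ h ∧ w P ≠ 0 ∧ g ∣ w P ∧ 0 < m ∧ m ≤ (P ^ h) ^ (lam - 1) ∧
      d = P ^ h * g * m ∧ P ^ h * m * w P ≤ ellu u d := by
  have hd1 : d ≠ 1 := by rintro rfl; exact hr (aux_rho_one lam hlam)
  have hne : d.primeFactors.Nonempty := by
    rw [Nat.nonempty_primeFactors]; omega
  obtain ⟨P, hP, hmax⟩ := Finset.exists_max_image d.primeFactors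
    (fun p => p ^ d.factorization p) hne
  have hPp := Nat.prime_of_mem_primeFactors hP
  have hPd := Nat.dvd_of_mem_primeFactors hP
  have hz : zu u d ≠ 0 := fun h => hl (by simp [ellu, h])
  have hw0 : w P ≠ 0 := fun h => hz (by have := hw1 P d hPp hPd; rw [h] at this; simpa using this)
  set h := d.factorization P with hh
  have hh1 : 1 ≤ h := (hPp.dvd_iff_one_le_factorization hd.ne').mp hPd
  set m₀ := d / P ^ h with hm₀
  have hdm : P ^ h * m₀ = d := Nat.ordProj_mul_ordCompl_eq_self d P
  have hm₀pos : 0 < m₀ := Nat.pos_of_ne_zero (by rintro h0; rw [h0] at hdm; omega)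
  have hPm : Nat.Coprime P m₀ := Nat.coprime_ordCompl hPp hd.ne'
  set g := Nat.gcd m₀ (w P) with hg
  have hgpos : 0 < g := Nat.gcd_pos_of_pos_left _ hm₀pos
  obtain ⟨m, hm⟩ : g ∣ m₀ := Nat.gcd_dvd_left _ _
  have hmpos : 0 < m := Nat.pos_of_ne_zero (by rintro rfl; omega)
  have hdle : d ≤ (P ^ h) ^ lam := by
    have hqpos : 1 ≤ P ^ h := Nat.one_le_pow _ _ hPp.pos
    calc d = ∏ p ∈ d.primeFactors, p ^ d.factorization p :=
          (Nat.prod_factorization_pow_eq_self hd.ne').symm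
      _ ≤ (P ^ h) ^ d.primeFactors.card := Finset.prod_le_pow_card _ _ _ hmax
      _ ≤ (P ^ h) ^ lam := Nat.pow_le_pow_right hqpos (aux_rho_card lam d hr)
  have hqpos : 0 < P ^ h := Nat.pow_pos hPp.pos
  refine ⟨P, h, g, m, hPp, hh1, hw0, Nat.gcd_dvd_right _ _, hmpos, ?_, ?_, ?_⟩
  · have h1 : m ≤ m₀ := by rw [hm]; exact Nat.le_mul_of_pos_left _ hgpos
    refine h1.trans ?_
    have h2 : P ^ h * m₀ ≤ P ^ h * (P ^ h) ^ (lam - 1) := by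
      rw [hdm, ← pow_succ', Nat.sub_add_cancel hlam]; exact hdle
    exact Nat.le_of_mul_le_mul_left h2 hqpos
  · rw [mul_assoc, ← hm, hdm]
  · apply Nat.le_of_dvd (Nat.pos_of_ne_zero hl)
    have hlcm : m * w P = Nat.lcm m₀ (w P) := by
      have := Nat.gcd_mul_lcm m₀ (w P)
      rw [← hg] at this
      have h3 : g * (m * w P) = g * Nat.lcm m₀ (w P) := by
        rw [this, ← mul_assoc, ← hm]
      exact Nat.eq_of_mul_eq_mul_left hgpos h3
    rw [mul_assoc, hlcm]
    have hdl : d ∣ ellu u d := Nat.dvd_lcm_left _ _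
    have hzl : zu u d ∣ ellu u d := Nat.dvd_lcm_right _ _
    apply Nat.Coprime.mul_dvd_of_dvd_of_dvd
    · apply Nat.Coprime.pow_left
      rw [← hlcm]
      apply Nat.Coprime.mul_right
      · exact hPm.coprime_dvd_right ⟨g, by rw [hm, mul_comm]⟩
      · exact (Nat.Prime.coprime_iff_not_dvd hPp).mpr (hw2 P hPp hw0)
    · exact (Dvd.intro _ hdm).trans hdl
    · exact Nat.lcm_dvd ((Dvd.intro_left _ hdm).trans hdl) ((hw1 P d hPp hPd).trans hzl)

lemma aux_summable_w (w : ℕ → ℕ) (B : ℝ)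
    (hw3 : ∀ n : ℕ, 0 < n → ∀ s : Finset ℕ,
        (∀ p ∈ s, p.Prime ∧ w p = n) → (s.card : ℝ) ≤ B * n) (c : ℝ) (hc : c < -2) :
    Summable fun p : ℕ => if p.Prime ∧ w p ≠ 0 then (w p : ℝ) ^ c else 0 := by
  classical
  have hS : Summable fun n : ℕ => B * (n : ℝ) ^ (c + 1) :=
    (Real.summable_nat_rpow.mpr (by linarith)).mul_left B
  have hB : 0 ≤ B := by
    have := hw3 1 one_pos ∅ (by simp)
    simpa using this
  refine summable_of_sum_le (c := ∑' n : ℕ, B * (n : ℝ) ^ (c + 1)) ?_ ?_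
  · intro p; dsimp only; split_ifs <;> positivity
  · intro s
    rw [← Finset.sum_filter]
    set t := s.filter fun p => p.Prime ∧ w p ≠ 0 with ht
    rw [← Finset.sum_fiberwise_of_maps_to (t := t.image w) (g := w)
      (fun p hp => Finset.mem_image_of_mem w hp)]
    calc ∑ n ∈ t.image w, ∑ p ∈ t with w p = n, (w p : ℝ) ^ c
        ≤ ∑ n ∈ t.image w, B * (n : ℝ) ^ (c + 1) := by
          apply Finset.sum_le_sum
          intro n hn
          have hn0 : 0 < n := by
            obtain ⟨p, hp, rfl⟩ := Finset.mem_image.mp hn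
            exact Nat.pos_of_ne_zero (Finset.mem_filter.mp hp).2.2
          have hn0' : (0 : ℝ) < n := by exact_mod_cast hn0
          have h1 : ∀ p ∈ t.filter (fun p => w p = n), (w p : ℝ) ^ c = (n : ℝ) ^ c := by
            intro p hp; rw [(Finset.mem_filter.mp hp).2]
          rw [Finset.sum_congr rfl h1, Finset.sum_const, nsmul_eq_mul,
            Real.rpow_add_one hn0'.ne', mul_comm ((n : ℝ) ^ c), ← mul_assoc]
          gcongr
          apply hw3 n hn0
          intro p hp
          rw [Finset.mem_filter, ht, Finset.mem_filter] at hp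
          exact ⟨hp.1.2.1, hp.2⟩
      _ ≤ ∑' n : ℕ, B * (n : ℝ) ^ (c + 1) :=
          hS.sum_le_tsum _ (fun n _ => by positivity)

lemma aux_summable_P (w : ℕ → ℕ) (B : ℝ)
    (hw3 : ∀ n : ℕ, 0 < n → ∀ s : Finset ℕ,
        (∀ p ∈ s, p.Prime ∧ w p = n) → (s.card : ℝ) ≤ B * n) (a b : ℝ)
    (ha : a < -(2 / 3)) (hb : b ≤ 0) (hab : a + b / 3 < -1) :
    Summable fun i : ℕ × ℕ => if i.1.Prime ∧ w i.1 ≠ 0 ∧ 1 ≤ i.2 then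
      ((i.1 : ℝ) ^ i.2) ^ a * (w i.1 : ℝ) ^ b else 0 := by
  have h1 : Summable fun p : ℕ => (p : ℝ) ^ (2 * a) + (p : ℝ) ^ (a + b / 3) +
      (if p.Prime ∧ w p ≠ 0 then (w p : ℝ) ^ (3 * a) else 0) :=
    ((Real.summable_nat_rpow.mpr (by linarith)).add (Real.summable_nat_rpow.mpr hab)).add
      (aux_summable_w w B hw3 (3 * a) (by linarith))
  have h2 : Summable fun h : ℕ => ((2 : ℝ) ^ a) ^ h * (2 : ℝ) ^ (-2 * a) :=
    (summable_geometric_of_lt_one (by positivity)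
      (Real.rpow_lt_one_of_one_lt_of_neg (by norm_num) (by linarith))).mul_right _
  have h3 := h1.mul_of_nonneg h2
    (fun p => by dsimp only [Pi.zero_apply]; split_ifs <;> positivity)
    (fun h => by dsimp only [Pi.zero_apply]; positivity)
  refine Summable.of_nonneg_of_le ?_ ?_ h3
  · rintro ⟨p, h⟩; dsimp only; split_ifs <;> positivity
  · rintro ⟨p, h⟩
    dsimp only
    by_cases hc : p.Prime ∧ w p ≠ 0 ∧ 1 ≤ h
    · rw [if_pos hc, if_pos ⟨hc.1, hc.2.1⟩]
      obtain ⟨hp, hw, hh⟩ := hc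
      have hp2 : (2 : ℝ) ≤ p := by exact_mod_cast hp.two_le
      have hp0 : (0 : ℝ) < p := by linarith
      have hw1 : (1 : ℝ) ≤ w p := by exact_mod_cast Nat.one_le_iff_ne_zero.mpr hw
      have hw0 : (0 : ℝ) < w p := by linarith
      have hwb : (w p : ℝ) ^ b ≤ 1 := Real.rpow_le_one_of_one_le_of_nonpos hw1 hb
      have e2 : ((2 : ℝ) ^ a) ^ h * (2 : ℝ) ^ (-2 * a) = (2 : ℝ) ^ (((h : ℝ) - 2) * a) := by
        rw [← Real.rpow_mul_natCast (by norm_num), ← Real.rpow_add (by norm_num)]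
        congr 1; ring
      have e1 : ((p : ℝ) ^ h) ^ a = (p : ℝ) ^ ((h : ℝ) * a) := by
        rw [← Real.rpow_natCast_mul hp0.le]
      rw [e2, e1]
      have q1 : 0 < (p : ℝ) ^ (2 * a) := by positivity
      have q2 : 0 < (p : ℝ) ^ (a + b / 3) := by positivity
      have q3 : 0 < (w p : ℝ) ^ (3 * a) := by positivity
      rcases Nat.eq_or_lt_of_le hh with h1 | h2
      · rw [← h1]
        have h4 : (1 : ℝ) ≤ 2 ^ (((1 : ℕ) - 2 : ℝ) * a) :=
          Real.one_le_rpow (by norm_num) (by push_cast; linarith)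
        have h5 : (p : ℝ) ^ ((1 : ℕ) * a) * (w p : ℝ) ^ b ≤
            (p : ℝ) ^ (2 * a) + (p : ℝ) ^ (a + b / 3) + (w p : ℝ) ^ (3 * a) := by
          rw [Nat.cast_one, one_mul]
          rcases le_total ((p : ℝ) ^ ((1 : ℝ) / 3)) (w p) with hle | hle
          · have : (w p : ℝ) ^ b ≤ (p : ℝ) ^ (b / 3) := by
              calc (w p : ℝ) ^ b ≤ ((p : ℝ) ^ ((1 : ℝ) / 3)) ^ b :=
                    Real.rpow_le_rpow_of_nonpos (by positivity) hle hb
                _ = (p : ℝ) ^ (b / 3) := by rw [← Real.rpow_mul hp0.le]; congr 1; ring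
            calc (p : ℝ) ^ a * (w p : ℝ) ^ b ≤ (p : ℝ) ^ a * (p : ℝ) ^ (b / 3) := by gcongr
              _ = (p : ℝ) ^ (a + b / 3) := by rw [Real.rpow_add hp0]
              _ ≤ _ := by linarith
          · have : (p : ℝ) ^ a ≤ (w p : ℝ) ^ (3 * a) := by
              calc (p : ℝ) ^ a = ((p : ℝ) ^ ((1 : ℝ) / 3)) ^ (3 * a) := by
                    rw [← Real.rpow_mul hp0.le]; congr 1; ring
                _ ≤ (w p : ℝ) ^ (3 * a) :=
                    Real.rpow_le_rpow_of_nonpos hw0 hle (by linarith)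
            calc (p : ℝ) ^ a * (w p : ℝ) ^ b ≤ (w p : ℝ) ^ (3 * a) * 1 := by gcongr
              _ ≤ _ := by linarith
        exact h5.trans (le_mul_of_one_le_right (by positivity) h4)
      · have hh2 : (2 : ℝ) ≤ h := by exact_mod_cast h2
        calc (p : ℝ) ^ ((h : ℝ) * a) * (w p : ℝ) ^ b ≤ (p : ℝ) ^ ((h : ℝ) * a) * 1 := by gcongr
          _ = (p : ℝ) ^ (2 * a) * (p : ℝ) ^ (((h : ℝ) - 2) * a) := by
              rw [mul_one, ← Real.rpow_add hp0]; congr 1; ring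
          _ ≤ (p : ℝ) ^ (2 * a) * (2 : ℝ) ^ (((h : ℝ) - 2) * a) := by
              apply mul_le_mul_of_nonneg_left _ q1.le
              exact Real.rpow_le_rpow_of_nonpos (by norm_num) hp2 (by nlinarith)
          _ ≤ _ := by
              gcongr
              linarith
    · rw [if_neg hc]
      apply mul_nonneg _ (by positivity)
      split_ifs <;> positivity

lemma aux_summable_H (w : ℕ → ℕ) (B : ℝ)
    (hw3 : ∀ n : ℕ, 0 < n → ∀ s : Finset ℕ,
        (∀ p ∈ s, p.Prime ∧ w p = n) → (s.card : ℝ) ≤ B * n) (a b η : ℝ)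
    (ha : a < -(2 / 3)) (hb : b ≤ 0) (hab : a + b / 3 < -1) (hη : 0 < η) :
    Summable fun i : ((ℕ × ℕ) × ℕ) × ℕ =>
      (if i.1.1.1.Prime ∧ w i.1.1.1 ≠ 0 ∧ 1 ≤ i.1.1.2 ∧ i.1.2 ∣ w i.1.1.1 then
      ((i.1.1.1 : ℝ) ^ i.1.1.2) ^ a * (w i.1.1.1 : ℝ) ^ (b - η) else 0) *
        (i.2 : ℝ) ^ (-1 - η) := by
  obtain ⟨C, hC, hdiv⟩ := aux_divisor_bound η hη
  have h1 := aux_summable_P w B hw3 a b ha hb hab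
  have key : Summable fun i : (ℕ × ℕ) × ℕ =>
      (if i.1.1.Prime ∧ w i.1.1 ≠ 0 ∧ 1 ≤ i.1.2 ∧ i.2 ∣ w i.1.1 then
      ((i.1.1 : ℝ) ^ i.1.2) ^ a * (w i.1.1 : ℝ) ^ (b - η) else 0) := by
    have hzero : ∀ (i : ℕ × ℕ), ∀ g ∉ (w i.1).divisors,
        (if i.1.Prime ∧ w i.1 ≠ 0 ∧ 1 ≤ i.2 ∧ g ∣ w i.1 then
          ((i.1 : ℝ) ^ i.2) ^ a * (w i.1 : ℝ) ^ (b - η) else 0) = 0 := by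
      intro i g hg
      apply if_neg
      rintro ⟨_, h2, _, h4⟩
      exact hg (Nat.mem_divisors.mpr ⟨h4, h2⟩)
    rw [summable_prod_of_nonneg]
    · refine ⟨fun i => summable_of_ne_finset_zero (hzero i), ?_⟩
      refine Summable.of_nonneg_of_le ?_ ?_ (h1.mul_left C)
      · intro i
        apply tsum_nonneg
        intro g; dsimp only; split_ifs <;> positivity
      · intro i
        rw [tsum_eq_sum (hzero i)]
        by_cases hc : i.1.Prime ∧ w i.1 ≠ 0 ∧ 1 ≤ i.2
        · rw [if_pos hc]
          have hw0 : (0 : ℝ) < w i.1 := by exact_mod_cast Nat.pos_of_ne_zero hc.2.1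
          have : ∀ g ∈ (w i.1).divisors, (if i.1.Prime ∧ w i.1 ≠ 0 ∧ 1 ≤ i.2 ∧ g ∣ w i.1 then
              ((i.1 : ℝ) ^ i.2) ^ a * (w i.1 : ℝ) ^ (b - η) else 0) =
              ((i.1 : ℝ) ^ i.2) ^ a * (w i.1 : ℝ) ^ (b - η) := by
            intro g hg
            exact if_pos ⟨hc.1, hc.2.1, hc.2.2, Nat.dvd_of_mem_divisors hg⟩
          rw [Finset.sum_congr rfl this, Finset.sum_const, nsmul_eq_mul]
          calc ((w i.1).divisors.card : ℝ) * (((i.1 : ℝ) ^ i.2) ^ a * (w i.1 : ℝ) ^ (b - η))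
              ≤ (C * (w i.1 : ℝ) ^ η) * (((i.1 : ℝ) ^ i.2) ^ a * (w i.1 : ℝ) ^ (b - η)) := by
                gcongr
                exact hdiv _ hc.2.1
            _ = C * (((i.1 : ℝ) ^ i.2) ^ a * ((w i.1 : ℝ) ^ η * (w i.1 : ℝ) ^ (b - η))) := by ring
            _ = _ := by rw [← Real.rpow_add hw0]; congr 3; ring
        · rw [if_neg hc, mul_zero]
          apply (Finset.sum_eq_zero _).le
          intro g hg
          exact if_neg fun h => hc ⟨h.1, h.2.1, h.2.2.1⟩
    · intro i; dsimp only [Pi.zero_apply]; split_ifs <;> positivity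
  refine key.mul_of_nonneg (g := fun m : ℕ => (m : ℝ) ^ (-1 - η))
    (Real.summable_nat_rpow.mpr (by linarith)) ?_ ?_
  · intro i; dsimp only [Pi.zero_apply]; split_ifs <;> positivity
  · intro i; dsimp only [Pi.zero_apply]; positivity

lemma aux_summable_main (u : ℕ → ℤ) (w : ℕ → ℕ)
    (hw1 : ∀ p d : ℕ, p.Prime → p ∣ d → w p ∣ zu u d)
    (hw2 : ∀ p : ℕ, p.Prime → w p ≠ 0 → ¬ p ∣ w p) (B : ℝ)
    (hw3 : ∀ n : ℕ, 0 < n → ∀ s : Finset ℕ,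
        (∀ p ∈ s, p.Prime ∧ w p = n) → (s.card : ℝ) ≤ B * n)
    (lam : ℕ) (hlam : 0 < lam) (σ : ℝ) (hσ : 0 < σ) (hσ' : σ < 1 / (3 * lam + 1)) :
    Summable fun d : ℕ => (d : ℝ) ^ σ * (rho lam d / ((ellu u d).totient : ℝ)) := by
  set η : ℝ := (1 / (3 * lam + 1) - σ) / 4 with hηdef
  have hη : 0 < η := by rw [hηdef]; linarith
  set s : ℝ := σ + 2 * η with hs
  set s' : ℝ := s + η with hs'
  have hlam1 : (1 : ℝ) ≤ lam := by exact_mod_cast hlam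
  have hs'lt : s' < 1 / (3 * lam + 1) := by rw [hs', hs]; linarith
  have hs'pos : 0 < s' := by rw [hs', hs]; linarith
  have hs'1 : s' * (3 * lam + 1) < 1 := by rwa [lt_div_iff₀ (by positivity)] at hs'lt
  obtain ⟨C₁, hC₁, hlog⟩ := aux_log_pow_le lam η hη
  obtain ⟨C₂, hC₂, htot⟩ := aux_totient_bound η hη
  have hH := aux_summable_H w B hw3 (lam * s' - 1) (s' - 1) η (by nlinarith) (by nlinarith)
    (by nlinarith) hη
  set S : Set ℕ := {d | 0 < d ∧ rho lam d ≠ 0 ∧ ellu u d ≠ 0} with hS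
  have hdec := fun d : S => aux_decomp u w hw1 hw2 lam hlam d d.2.1 d.2.2.1 d.2.2.2
  choose P h g m hP hh hw0 hg hm hmle hd hell using hdec
  have hinj : Function.Injective fun d : S => (((P d, h d), g d), m d) := by
    intro d d' hdd
    simp only [Prod.mk.injEq] at hdd
    apply Subtype.ext
    rw [hd d, hd d', hdd.1.1.1, hdd.1.1.2, hdd.1.2, hdd.2]
  have hsub : Summable fun d : S =>
      ((d : ℕ) : ℝ) ^ σ * (rho lam d / ((ellu u d).totient : ℝ)) := by
    refine Summable.of_nonneg_of_le ?_ ?_ ((hH.comp_injective hinj).mul_left (C₁ * C₂))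
    · intro d
      have := aux_rho_nonneg lam d
      positivity
    · intro d
      simp only [Function.comp]
      rw [if_pos ⟨hP d, hw0 d, hh d, hg d⟩]
      have hd1 : (1 : ℝ) ≤ ((d : ℕ) : ℝ) := by exact_mod_cast d.2.1
      set q : ℝ := (P d : ℝ) ^ h d with hq
      have hq1 : 1 ≤ q := one_le_pow₀ (by exact_mod_cast (hP d).one_lt.le)
      have hq0 : 0 < q := by linarith
      have hm1 : (1 : ℝ) ≤ m d := by exact_mod_cast hm d
      have hm0 : (0 : ℝ) < m d := by linarith
      have hwp : (0 : ℝ) < w (P d) := by exact_mod_cast Nat.pos_of_ne_zero (hw0 d)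
      have hgw : (g d : ℝ) ≤ w (P d) := by
        exact_mod_cast Nat.le_of_dvd (Nat.pos_of_ne_zero (hw0 d)) (hg d)
      have hdq : ((d : ℕ) : ℝ) = q * g d * m d := by
        rw [hq]; exact_mod_cast hd d
      have hellr : q * m d * w (P d) ≤ (ellu u d : ℝ) := by
        rw [hq]; exact_mod_cast hell d
      have hmler : (m d : ℝ) ≤ q ^ ((lam : ℝ) - 1) := by
        have h1 : (m d : ℝ) ≤ q ^ (lam - 1) := by rw [hq]; exact_mod_cast hmle d
        rwa [← Real.rpow_natCast, Nat.cast_sub hlam, Nat.cast_one] at h1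
      have hη1 : η - 1 ≤ 0 := by nlinarith
      have b1 : rho lam d ≤ C₁ * ((d : ℕ) : ℝ) ^ η :=
        (aux_rho_le lam d d.2.1.ne').trans (hlog _ hd1)
      have b2 : 1 / ((ellu u d).totient : ℝ) ≤ C₂ * (q * m d * w (P d)) ^ (η - 1) :=
        (htot _ d.2.2.2).trans (by
          apply mul_le_mul_of_nonneg_left _ hC₂.le
          exact Real.rpow_le_rpow_of_nonpos (by positivity) hellr hη1)
      have b3 : ((d : ℕ) : ℝ) ^ (σ + η) ≤ (q * m d * w (P d)) ^ (σ + η) := by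
        apply Real.rpow_le_rpow (by positivity) _ (by positivity)
        rw [hdq, mul_right_comm]
        gcongr
      have b4 : (m d : ℝ) ^ s' ≤ q ^ (((lam : ℝ) - 1) * s') := by
        rw [Real.rpow_mul hq0.le]
        exact Real.rpow_le_rpow hm0.le hmler hs'pos.le
      calc ((d : ℕ) : ℝ) ^ σ * (rho lam d / ((ellu u d).totient : ℝ))
          = ((d : ℕ) : ℝ) ^ σ * (rho lam d * (1 / ((ellu u d).totient : ℝ))) := by ring
        _ ≤ ((d : ℕ) : ℝ) ^ σ * ((C₁ * ((d : ℕ) : ℝ) ^ η) *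
              (C₂ * (q * m d * w (P d)) ^ (η - 1))) := by
            gcongr
        _ = C₁ * C₂ * (((d : ℕ) : ℝ) ^ (σ + η) * (q * m d * w (P d)) ^ (η - 1)) := by
            rw [Real.rpow_add (by linarith)]; ring
        _ ≤ C₁ * C₂ * ((q * m d * w (P d)) ^ (σ + η) * (q * m d * w (P d)) ^ (η - 1)) := by
            gcongr
        _ = C₁ * C₂ * (q ^ (s - 1) * (m d : ℝ) ^ (s - 1) * (w (P d) : ℝ) ^ (s - 1)) := by
            rw [← Real.rpow_add (by positivity), ← Real.mul_rpow hq0.le hm0.le,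
              ← Real.mul_rpow (by positivity) hwp.le]
            congr 2; rw [hs]; ring
        _ = C₁ * C₂ * (q ^ (s - 1) * ((m d : ℝ) ^ s' * (m d : ℝ) ^ (-1 - η)) *
              (w (P d) : ℝ) ^ (s - 1)) := by
            rw [← Real.rpow_add hm0]
            congr 4; rw [hs']; ring
        _ ≤ C₁ * C₂ * (q ^ (s' - 1) * (q ^ (((lam : ℝ) - 1) * s') * (m d : ℝ) ^ (-1 - η)) *
              (w (P d) : ℝ) ^ (s - 1)) := by
            gcongr
            rw [hs']; linarith
        _ = C₁ * C₂ * ((q ^ (s' - 1) * q ^ (((lam : ℝ) - 1) * s')) * (w (P d) : ℝ) ^ (s - 1) *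
              (m d : ℝ) ^ (-1 - η)) := by ring
        _ = _ := by
            rw [← Real.rpow_add hq0]
            congr 4
            · ring
            · rw [hs']; ring
  replace hsub := (summable_subtype_iff_indicator (f := fun d : ℕ =>
    (d : ℝ) ^ σ * (rho lam d / ((ellu u d).totient : ℝ)))).mp hsub
  convert hsub using 1
  symm
  apply Set.indicator_eq_self.mpr
  intro d hd'
  rw [Function.mem_support] at hd'
  refine ⟨Nat.pos_of_ne_zero ?_, ?_, ?_⟩
  · rintro rfl; apply hd'; simp [Real.zero_rpow hσ.ne']
  · intro h0; apply hd'; simp [h0]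
  · intro h0; apply hd'; simp [h0]

lemma aux_mem_primes (x : ℝ) (p : ℕ) (hp : p ∈ primesUpTo x) : p.Prime ∧ p ≤ ⌊x⌋₊ := by
  simp only [primesUpTo, Finset.mem_filter, Finset.mem_range] at hp
  exact ⟨hp.2, by omega⟩

lemma aux_primePi_le (x : ℝ) (hx : 0 ≤ x) : (primePi x : ℝ) ≤ x := by
  have h : primePi x ≤ ⌊x⌋₊ := by
    calc primePi x ≤ (Finset.Icc 1 ⌊x⌋₊).card := Finset.card_le_card (by
          intro p hp
          have := aux_mem_primes x p hp
          exact Finset.mem_Icc.mpr ⟨this.1.one_lt.le, this.2⟩)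
      _ = ⌊x⌋₊ := by simp
  exact le_trans (by exact_mod_cast h) (Nat.floor_le hx)

lemma aux_mod_iff (b p : ℕ) (hp : p.Prime) : p % b = 1 % b ↔ b ∣ p - 1 := by
  rw [eq_comm]
  exact Nat.modEq_iff_dvd' hp.one_lt.le

lemma aux_primePiMod_le (x : ℝ) (hx : 0 ≤ x) (b : ℕ) (hb : 0 < b) :
    (primePiMod x b 1 : ℝ) ≤ x / b := by
  have h : primePiMod x b 1 ≤ ⌊x⌋₊ / b := by
    rw [← Nat.Ioc_filter_dvd_card_eq_div]
    apply Finset.card_le_card_of_injOn (fun p => p - 1)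
    · intro p hp
      simp only [Finset.coe_filter, Set.mem_ofPred_eq] at hp
      have h1 := aux_mem_primes x p hp.1
      have h2 := h1.1.two_le
      simp only [Finset.coe_filter, Set.mem_ofPred_eq, Finset.mem_Ioc]
      exact ⟨⟨by omega, by omega⟩, (aux_mod_iff b p h1.1).mp hp.2⟩
    · intro p hp q hq hpq
      simp only [Finset.coe_filter, Set.mem_ofPred_eq] at hp hq
      have h1 := (aux_mem_primes x p hp.1).1.two_le
      have h2 := (aux_mem_primes x q hq.1).1.two_le
      simp only at hpq
      omega
  calc (primePiMod x b 1 : ℝ) ≤ ((⌊x⌋₊ / b : ℕ) : ℝ) := by exact_mod_cast h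
    _ ≤ (⌊x⌋₊ : ℝ) / b := Nat.cast_div_le
    _ ≤ x / b := by gcongr; exact Nat.floor_le hx

lemma aux_chebErr_zero (x : ℝ) : chebErr x 0 1 = 0 := by
  have : primePiMod x 0 1 = 0 := by
    rw [primePiMod, Finset.card_eq_zero, Finset.filter_eq_empty_iff]
    intro p hp h
    have := (aux_mem_primes x p hp).1.two_le
    simp at h
    omega
  simp [chebErr, this]

lemma aux_chebErr_le (x : ℝ) (hx : 0 ≤ x) (b : ℕ) :
    |chebErr x b 1| ≤ x / (b.totient : ℝ) := by
  rcases Nat.eq_zero_or_pos b with rfl | hb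
  · simp [aux_chebErr_zero]
  have ht : (0 : ℝ) < b.totient := by exact_mod_cast Nat.totient_pos.mpr hb
  have htb : (b.totient : ℝ) ≤ b := by exact_mod_cast Nat.totient_le b
  apply abs_sub_le_of_nonneg_of_le (by positivity) _ (by positivity) _
  · exact (aux_primePiMod_le x hx b hb).trans (by gcongr)
  · have := aux_primePi_le x hx
    gcongr

lemma aux_divisors_gu (a₁ a₂ : ℤ) (hcop : IsCoprime a₁ a₂)
    (u : ℕ → ℤ) (hu0 : u 0 = 0) (hu1 : u 1 = 1)
    (hrec : ∀ n : ℕ, u (n + 2) = a₁ * u (n + 1) + a₂ * u n)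
    (n N : ℕ) (hn : 0 < n) (hnN : n ≤ N) :
    (gu u n).divisors = ((Finset.Icc 1 N).filter fun d : ℕ => 0 < d ∧ Int.gcd (d : ℤ) a₂ = 1).filter
      fun d => ellu u d ∣ n := by
  have hg0 : gu u n ≠ 0 := by
    rw [gu, Ne, Int.gcd_eq_zero_iff]
    rintro ⟨h, _⟩
    exact hn.ne' (by exact_mod_cast h)
  have hdvd : ∀ d : ℕ, d ∣ gu u n ↔ ellu u d ∣ n := by
    intro d
    rw [gu, ellu, Nat.lcm_dvd_iff, ← auxu_dvd_iff a₁ a₂ hcop u hu0 hu1 hrec,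
      ← Int.natCast_dvd_natCast (m := d) (n := n), Int.dvd_gcd_iff]
  ext d
  simp only [Nat.mem_divisors, Finset.mem_filter, Finset.mem_Icc]
  constructor
  · rintro ⟨hd, _⟩
    have h1 := (hdvd d).mp hd
    have h2 : d ∣ n := (Nat.dvd_lcm_left _ _).trans h1
    have h3 : 0 < d := Nat.pos_of_dvd_of_pos h2 hn
    have h4 : (d : ℤ) ∣ u n :=
      (auxu_dvd_iff a₁ a₂ hcop u hu0 hu1 hrec d n).mpr ((Nat.dvd_lcm_right _ _).trans h1)
    obtain ⟨k, rfl⟩ : ∃ k, n = k + 1 := ⟨n - 1, by omega⟩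
    have h5 := (auxu_cop_a a₁ a₂ hcop u hu1 hrec k).of_isCoprime_of_dvd_left h4
    exact ⟨⟨⟨h3, (Nat.le_of_dvd hn h2).trans hnN⟩, h3, Int.isCoprime_iff_gcd_eq_one.mp h5⟩, h1⟩
  · rintro ⟨_, h⟩
    exact ⟨(hdvd d).mpr h, hg0⟩

lemma aux_sum_eq (a₁ a₂ : ℤ) (hcop : IsCoprime a₁ a₂)
    (u : ℕ → ℤ) (hu0 : u 0 = 0) (hu1 : u 1 = 1)
    (hrec : ∀ n : ℕ, u (n + 2) = a₁ * u (n + 1) + a₂ * u n) (lam : ℕ) (x : ℝ) :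
    HasSum (fun d : ℕ => if 0 < d ∧ Int.gcd (d : ℤ) a₂ = 1 then
        rho lam d * (primePiMod x (ellu u d) 1 : ℝ) else 0)
      (∑ p ∈ primesUpTo x, Real.log (gu u (p - 1) : ℝ) ^ lam) := by
  have h1 : ∑ p ∈ primesUpTo x, Real.log (gu u (p - 1) : ℝ) ^ lam =
      ∑ d ∈ Finset.Icc 1 ⌊x⌋₊, if 0 < d ∧ Int.gcd (d : ℤ) a₂ = 1 then
        rho lam d * (primePiMod x (ellu u d) 1 : ℝ) else 0 := by
    have e : ∀ p ∈ primesUpTo x, Real.log (gu u (p - 1) : ℝ) ^ lam =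
        ∑ d ∈ (Finset.Icc 1 ⌊x⌋₊).filter fun d : ℕ => 0 < d ∧ Int.gcd (d : ℤ) a₂ = 1,
          if p % ellu u d = 1 % ellu u d then rho lam d else 0 := by
      intro p hp
      have hp1 := aux_mem_primes x p hp
      have hp2 := hp1.1.two_le
      have hg0 : gu u (p - 1) ≠ 0 := by
        rw [gu, Ne, Int.gcd_eq_zero_iff]
        rintro ⟨h, _⟩
        have : p - 1 = 0 := by exact_mod_cast h
        omega
      rw [← aux_rho_sum lam _ hg0, aux_divisors_gu a₁ a₂ hcop u hu0 hu1 hrec (p - 1) ⌊x⌋₊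
        (by omega) (by omega), Finset.sum_filter]
      apply Finset.sum_congr rfl
      intro d _
      simp only [aux_mod_iff _ p hp1.1]
    rw [Finset.sum_congr rfl e, Finset.sum_comm, Finset.sum_filter]
    apply Finset.sum_congr rfl
    intro d _
    split_ifs with hc
    · rw [← Finset.sum_filter, Finset.sum_const, nsmul_eq_mul, mul_comm, primePiMod]
    · rfl
  rw [h1]
  apply hasSum_sum_of_ne_finset_zero
  intro d hd
  split_ifs with hc
  · have : primePiMod x (ellu u d) 1 = 0 := by
      rw [primePiMod, Finset.card_eq_zero, Finset.filter_eq_empty_iff]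
      intro p hp h
      have hp1 := aux_mem_primes x p hp
      have hp2 := hp1.1.two_le
      rw [aux_mod_iff _ p hp1.1] at h
      have h2 : d ∣ p - 1 := (Nat.dvd_lcm_left _ _).trans h
      have h3 := Nat.le_of_dvd (by omega) h2
      exact hd (Finset.mem_Icc.mpr ⟨hc.1, by omega⟩)
    simp [this]
  · rfl

/-- Assuming a GRH-type bound `|Δ(x;b,1)| ≤ K·√x·log x`, for every positive
integer `λ` and `ε > 0` there is `C > 0` such that
`|Σ_{p ≤ x} (log g_u(p-1))^λ − P_{u,λ}·π(x)| ≤ C·x^{(6λ+3)/(6λ+4)+ε}` for all `x ≥ 2`. -/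
theorem statement1 (a₁ a₂ : ℤ) (hcop : IsCoprime a₁ a₂) (ha₂ : a₂ ≠ 0)
    (hΔ : a₁ ^ 2 + 4 * a₂ ≠ 0)
    (u : ℕ → ℤ) (hu0 : u 0 = 0) (hu1 : u 1 = 1)
    (hrec : ∀ n : ℕ, u (n + 2) = a₁ * u (n + 1) + a₂ * u n)
    (hnd : ∀ α β : ℂ, α ^ 2 = (a₁ : ℂ) * α + (a₂ : ℂ) →
      β ^ 2 = (a₁ : ℂ) * β + (a₂ : ℂ) → α ≠ β → ∀ k : ℕ, 0 < k → (α / β) ^ k ≠ 1)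
    (K : ℝ) (hK : 0 < K)
    (hGRH : ∀ b : ℕ, 1 ≤ b → ∀ x : ℝ, 2 ≤ x →
      |chebErr x b 1| ≤ K * x ^ ((1 : ℝ) / 2) * Real.log x)
    (lam : ℕ) (hlam : 0 < lam) (ε : ℝ) (hε : 0 < ε) :
    ∃ C : ℝ, 0 < C ∧ ∀ x : ℝ, 2 ≤ x →
      |(∑ p ∈ primesUpTo x, Real.log (gu u (p - 1) : ℝ) ^ lam) -
          (∑' n : ℕ, if 0 < n ∧ Int.gcd (n : ℤ) a₂ = 1 then
            rho lam n / (Nat.totient (ellu u n) : ℝ) else 0) * (primePi x : ℝ)| ≤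
        C * x ^ ((6 * (lam : ℝ) + 3) / (6 * (lam : ℝ) + 4) + ε) := by
  obtain ⟨w, hw1, hw2, B, -, hw3⟩ := aux_exists_w a₁ a₂ hcop ha₂ hΔ u hu0 hu1 hrec hnd
  have hlam1 : (1 : ℝ) ≤ lam := by exact_mod_cast hlam
  set ε' : ℝ := min ε (1 / (2 * (3 * lam + 1))) with hε'
  have hε'pos : 0 < ε' := lt_min hε (by positivity)
  have hε'le : ε' ≤ ε := min_le_left _ _
  set σ : ℝ := 1 / (3 * lam + 1) - ε' with hσdef
  have hσ : 0 < σ := by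
    have h1 : ε' ≤ 1 / (2 * (3 * lam + 1)) := min_le_right _ _
    have h2 : (1 : ℝ) / (2 * (3 * lam + 1)) = (1 / (3 * lam + 1)) / 2 := by
      field_simp
    have h3 : (0 : ℝ) < 1 / (3 * lam + 1) := by positivity
    rw [hσdef]; linarith
  have hsum := aux_summable_main u w hw1 hw2 B hw3 lam hlam σ hσ (by rw [hσdef]; linarith)
  set S : ℝ := ∑' d : ℕ, (d : ℝ) ^ σ * (rho lam d / ((ellu u d).totient : ℝ)) with hSdef
  have hterm : ∀ d : ℕ, 0 ≤ rho lam d / ((ellu u d).totient : ℝ) := fun d => by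
    have := aux_rho_nonneg lam d
    positivity
  have hS0 : 0 ≤ S := tsum_nonneg fun d => mul_nonneg (by positivity) (hterm d)
  have hsumt : Summable fun n : ℕ => if 0 < n ∧ Int.gcd (n : ℤ) a₂ = 1 then
      rho lam n / (Nat.totient (ellu u n) : ℝ) else 0 := by
    refine Summable.of_nonneg_of_le ?_ ?_ hsum
    · intro d; split_ifs
      · exact hterm d
      · exact le_rfl
    · intro d
      split_ifs with hc
      · have : (1 : ℝ) ≤ (d : ℝ) ^ σ := Real.one_le_rpow (by exact_mod_cast hc.1) hσ.le
        exact le_mul_of_one_le_left (hterm d) this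
      · exact mul_nonneg (by positivity) (hterm d)
  obtain ⟨C₁, hC₁, hlog⟩ := aux_log_pow_le (lam + 1) ε hε
  refine ⟨K * C₁ + S, by positivity, fun x hx => ?_⟩
  have hx1 : 1 ≤ x := by linarith
  have hx0 : 0 < x := by linarith
  set θ : ℝ := (3 * lam + 1) / (6 * lam + 4) with hθdef
  have hθ0 : 0 < θ := by positivity
  have hθ1 : θ ≤ 1 := by rw [hθdef, div_le_one (by positivity)]; linarith
  set y : ℝ := x ^ θ with hy
  have hy0 : 0 < y := by positivity
  have hyx : y ≤ x := by
    calc y ≤ x ^ (1 : ℝ) := Real.rpow_le_rpow_of_exponent_le hx1 hθ1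
      _ = x := Real.rpow_one x
  set E : ℝ := K * x ^ ((1 : ℝ) / 2) * Real.log x * Real.log x ^ lam with hE
  have hlogx : 0 ≤ Real.log x := Real.log_nonneg hx1
  have hE0 : 0 ≤ E := by positivity
  -- the error as one series
  have hL := aux_sum_eq a₁ a₂ hcop u hu0 hu1 hrec lam x
  have hdiff := hL.sub (hsumt.hasSum.mul_right (primePi x : ℝ))
  have hbound : HasSum (fun d : ℕ => (if d ∈ Finset.Icc 1 ⌊y⌋₊ then E else 0) +
      x * y ^ (-σ) * ((d : ℝ) ^ σ * (rho lam d / ((ellu u d).totient : ℝ))))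
      ((⌊y⌋₊ : ℝ) * E + x * y ^ (-σ) * S) := by
    refine HasSum.add ?_ (hsum.hasSum.mul_left _)
    have h1 := hasSum_sum_of_ne_finset_zero (L := SummationFilter.unconditional ℕ)
      (f := fun d : ℕ => if d ∈ Finset.Icc 1 ⌊y⌋₊ then E else 0)
      (s := Finset.Icc 1 ⌊y⌋₊) (fun d hd => if_neg hd)
    have h2 : ∑ d ∈ Finset.Icc 1 ⌊y⌋₊, (if d ∈ Finset.Icc 1 ⌊y⌋₊ then E else 0) =
        (⌊y⌋₊ : ℝ) * E := by
      rw [Finset.sum_congr rfl (fun d hd => if_pos hd)]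
      simp
    rwa [h2] at h1
  have hmain := tsum_of_norm_bounded (f := fun d : ℕ =>
    (if 0 < d ∧ Int.gcd (d : ℤ) a₂ = 1 then
        rho lam d * (primePiMod x (ellu u d) 1 : ℝ) else 0) -
    (if 0 < d ∧ Int.gcd (d : ℤ) a₂ = 1 then
      rho lam d / (Nat.totient (ellu u d) : ℝ) else 0) * (primePi x : ℝ)) hbound (by
    intro d
    have hr := aux_rho_nonneg lam d
    have hsec : 0 ≤ x * y ^ (-σ) * ((d : ℝ) ^ σ * (rho lam d / ((ellu u d).totient : ℝ))) := by
      have := hterm d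
      positivity
    have hfst : 0 ≤ (if d ∈ Finset.Icc 1 ⌊y⌋₊ then E else 0) := by split_ifs <;> simp [hE0]
    by_cases hc : 0 < d ∧ Int.gcd (d : ℤ) a₂ = 1
    · rw [if_pos hc, if_pos hc]
      have he : rho lam d * (primePiMod x (ellu u d) 1 : ℝ) -
          rho lam d / ((ellu u d).totient : ℝ) * (primePi x : ℝ) =
          rho lam d * chebErr x (ellu u d) 1 := by rw [chebErr]; ring
      rw [he, Real.norm_eq_abs, abs_mul, abs_of_nonneg hr]
      have hd1 : (1 : ℝ) ≤ d := by exact_mod_cast hc.1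
      by_cases hdy : d ≤ ⌊y⌋₊
      · rw [if_pos (Finset.mem_Icc.mpr ⟨hc.1, hdy⟩)]
        have h1 : |chebErr x (ellu u d) 1| ≤ K * x ^ ((1 : ℝ) / 2) * Real.log x := by
          rcases Nat.eq_zero_or_pos (ellu u d) with h0 | h0
          · rw [h0, aux_chebErr_zero, abs_zero]; positivity
          · exact hGRH _ h0 x hx
        have hdx : (d : ℝ) ≤ x :=
          ((Nat.cast_le.mpr hdy).trans (Nat.floor_le hy0.le)).trans hyx
        have h2 : rho lam d ≤ Real.log x ^ lam := by
          refine (aux_rho_le lam d hc.1.ne').trans ?_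
          have h3 : 0 ≤ Real.log d := Real.log_nonneg hd1
          have h4 : Real.log d ≤ Real.log x := Real.log_le_log (by linarith) hdx
          gcongr
        have h5 : rho lam d * |chebErr x (ellu u d) 1| ≤ E := by
          rw [hE, mul_comm _ (Real.log x ^ lam)]
          gcongr
        linarith
      · have hyd : y ≤ d := by
          have := Nat.lt_of_floor_lt (not_le.mp hdy)
          exact this.le
        have h1 : 1 ≤ y ^ (-σ) * (d : ℝ) ^ σ := by
          rw [Real.rpow_neg hy0.le, inv_mul_eq_div, one_le_div (by positivity)]
          exact Real.rpow_le_rpow hy0.le hyd hσ.le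
        have h2 : rho lam d * |chebErr x (ellu u d) 1| ≤
            x * y ^ (-σ) * ((d : ℝ) ^ σ * (rho lam d / ((ellu u d).totient : ℝ))) := by
          calc rho lam d * |chebErr x (ellu u d) 1|
              ≤ rho lam d * (x / ((ellu u d).totient : ℝ)) := by
                gcongr; exact aux_chebErr_le x hx0.le _
            _ = 1 * (x * (rho lam d / ((ellu u d).totient : ℝ))) := by ring
            _ ≤ (y ^ (-σ) * (d : ℝ) ^ σ) * (x * (rho lam d / ((ellu u d).totient : ℝ))) := by
                have := hterm d
                gcongr
            _ = _ := by ring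
        linarith
    · rw [if_neg hc, if_neg hc]
      simp only [zero_mul, sub_self, norm_zero]
      linarith)
  rw [hdiff.tsum_eq, Real.norm_eq_abs] at hmain
  refine hmain.trans ?_
  have hden : (0 : ℝ) < 6 * lam + 4 := by positivity
  have p1 : (⌊y⌋₊ : ℝ) * E ≤ K * C₁ * x ^ ((6 * (lam : ℝ) + 3) / (6 * (lam : ℝ) + 4) + ε) := by
    have h1 : Real.log x ^ (lam + 1) ≤ C₁ * x ^ ε := hlog x hx1
    calc (⌊y⌋₊ : ℝ) * E ≤ y * E := by gcongr; exact Nat.floor_le hy0.le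
      _ = K * (x ^ θ * x ^ ((1 : ℝ) / 2)) * Real.log x ^ (lam + 1) := by
          rw [hE, hy, pow_succ]; ring
      _ ≤ K * (x ^ θ * x ^ ((1 : ℝ) / 2)) * (C₁ * x ^ ε) := by gcongr
      _ = K * C₁ * (x ^ θ * x ^ ((1 : ℝ) / 2) * x ^ ε) := by ring
      _ = _ := by
          rw [← Real.rpow_add hx0, ← Real.rpow_add hx0]
          congr 3
          rw [hθdef]; field_simp; ring
  have p2 : x * y ^ (-σ) * S ≤ S * x ^ ((6 * (lam : ℝ) + 3) / (6 * (lam : ℝ) + 4) + ε) := by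
    rw [mul_comm]
    apply mul_le_mul_of_nonneg_left _ hS0
    rw [hy, ← Real.rpow_mul hx0.le]
    nth_rewrite 1 [← Real.rpow_one x]
    rw [← Real.rpow_add hx0]
    apply Real.rpow_le_rpow_of_exponent_le hx1
    have h1 : 1 + θ * -σ = (6 * (lam : ℝ) + 3) / (6 * (lam : ℝ) + 4) + θ * ε' := by
      rw [hσdef, hθdef]; field_simp; ring
    rw [h1]
    have h2 : θ * ε' ≤ 1 * ε := mul_le_mul hθ1 hε'le hε'pos.le (by norm_num)
    linarith
  linarith
end

section
/- Suppose the discriminant satisfies Δᵤ ≠ 1, and let p be the least prime divisor of Δᵤ. Then for every real x ≥ 1, x/p ≤ max{g_u(n) : n a positive integer, n ≤ x} ≤ x; in particular max{g_u(n) : n ≤ x} ≫ x. -/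
open scoped BigOperators

theorem lucas_add (a b : ℤ) (u : ℕ → ℤ) (hu0 : u 0 = 0) (hu1 : u 1 = 1)
    (hrec : ∀ n : ℕ, u (n + 2) = a * u (n + 1) + b * u n) (m : ℕ) :
    ∀ n : ℕ, u (m + n) = u (m + 1) * u n + u m * (u (n + 1) - a * u n) ∧
      u (m + n + 1) = u (m + 1) * u (n + 1) + b * u m * u n := by
  intro n
  induction n with
  | zero => simp [hu0, hu1]
  | succ n ih =>
    obtain ⟨h1, h2⟩ := ih
    have e1 : m + (n + 1) = m + n + 1 := by omega
    have e2 : n + 1 + 1 = n + 2 := by omega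
    refine ⟨?_, ?_⟩
    · rw [e1, h2, e2, hrec n]; ring
    · have e3 : m + (n + 1) + 1 = (m + n) + 2 := by omega
      rw [e3, hrec (m + n), h1, h2, e2, hrec n]; ring

theorem lucas_mul (a b : ℤ) (u : ℕ → ℤ) (hu0 : u 0 = 0) (hu1 : u 1 = 1)
    (hrec : ∀ n : ℕ, u (n + 2) = a * u (n + 1) + b * u n) (n : ℕ) :
    ∀ k : ℕ, (∃ t, u ((k + 1) * n) = (k + 1) * u n * u (n + 1) ^ k + u n ^ 2 * t) ∧
      (∃ s, u ((k + 1) * n + 1) = u (n + 1) ^ (k + 1) + u n * s) := by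
  intro k
  induction k with
  | zero => exact ⟨⟨0, by simp⟩, ⟨0, by simp⟩⟩
  | succ k ih =>
    obtain ⟨⟨t, ht⟩, ⟨s, hs⟩⟩ := ih
    obtain ⟨h1, h2⟩ := lucas_add a b u hu0 hu1 hrec ((k + 1) * n) n
    have e : (k + 1 + 1) * n = (k + 1) * n + n := by ring
    rw [e]
    refine ⟨⟨s + t * (u (n + 1) - a * u n) - (k + 1) * u (n + 1) ^ k * a, ?_⟩,
      ⟨s * u (n + 1) + b * u ((k + 1) * n), ?_⟩⟩
    · rw [h1, hs, ht]; push_cast; ring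
    · rw [h2, hs]; ring

theorem lucas_disc (a b : ℤ) (u : ℕ → ℤ) (hu0 : u 0 = 0) (hu1 : u 1 = 1)
    (hrec : ∀ n : ℕ, u (n + 2) = a * u (n + 1) + b * u n) :
    ∀ n : ℕ, (∃ t, 2 ^ n * u (n + 1) = (n + 1) * a ^ n + (a ^ 2 + 4 * b) * t) ∧
      (∃ s, 2 ^ (n + 1) * u (n + 2) = (n + 2) * a ^ (n + 1) + (a ^ 2 + 4 * b) * s) := by
  intro n
  induction n with
  | zero => exact ⟨⟨0, by simp [hu1]⟩, ⟨0, by simp [hrec 0, hu0, hu1]⟩⟩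
  | succ n ih =>
    obtain ⟨⟨t, ht⟩, ⟨s, hs⟩⟩ := ih
    refine ⟨⟨s, ?_⟩, ⟨2 * a * s + 4 * b * t + (n + 1) * a ^ n, ?_⟩⟩
    · push_cast; rw [show n + 1 + 1 = n + 2 from rfl, hs]; ring
    · rw [hrec (n + 1)]
      push_cast
      have : (2 : ℤ) ^ (n + 1 + 1) * (a * u (n + 1 + 1) + b * u (n + 1))
        = 2 * a * (2 ^ (n + 1) * u (n + 2)) + 4 * b * (2 ^ n * u (n + 1)) := by ring
      rw [this, hs, ht]; ring

theorem lucas_prime_dvd (a b : ℤ) (u : ℕ → ℤ) (hu0 : u 0 = 0) (hu1 : u 1 = 1)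
    (hrec : ∀ n : ℕ, u (n + 2) = a * u (n + 1) + b * u n)
    (p : ℕ) (hp : p.Prime) (hpd : (p : ℤ) ∣ a ^ 2 + 4 * b) : (p : ℤ) ∣ u p := by
  have hpi : Prime (p : ℤ) := Nat.prime_iff_prime_int.mp hp
  rcases hp.eq_two_or_odd' with h2 | hodd
  · subst h2
    have h := hrec 0
    simp only [zero_add, hu0, hu1, mul_zero, add_zero, mul_one] at h
    rw [h]
    have h4 : ((2 : ℕ) : ℤ) ∣ 4 * b := ⟨2 * b, by push_cast; ring⟩
    exact hpi.dvd_of_dvd_pow ((dvd_add_left h4).mp hpd)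
  · obtain ⟨n, hn⟩ : ∃ n, p = n + 1 := ⟨p - 1, by have := hp.pos; omega⟩
    obtain ⟨⟨t, ht⟩, -⟩ := lucas_disc a b u hu0 hu1 hrec n
    rw [← hn] at ht
    have hc : ((n : ℤ) + 1) = (p : ℤ) := by rw [hn]; push_cast; ring
    rw [hc] at ht
    have hd : (p : ℤ) ∣ 2 ^ n * u p := by
      rw [ht]; exact dvd_add (Dvd.intro _ rfl) (hpd.mul_right t)
    rcases hpi.dvd_or_dvd hd with h | h
    · exfalso
      have h' : (p : ℤ) ∣ ((2 : ℕ) : ℤ) := by exact_mod_cast hpi.dvd_of_dvd_pow h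
      have h'' : p ∣ 2 := Int.natCast_dvd_natCast.mp h'
      have := (Nat.prime_dvd_prime_iff_eq hp Nat.prime_two).mp h''
      subst this
      exact absurd hodd (by decide)
    · exact h

theorem lucas_pow_dvd (a b : ℤ) (u : ℕ → ℤ) (hu0 : u 0 = 0) (hu1 : u 1 = 1)
    (hrec : ∀ n : ℕ, u (n + 2) = a * u (n + 1) + b * u n)
    (p : ℕ) (hp : p.Prime) (hpd : (p : ℤ) ∣ a ^ 2 + 4 * b) (k : ℕ) :
    (p : ℤ) ^ (k + 1) ∣ u (p ^ (k + 1)) := by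
  induction k with
  | zero => simpa using lucas_prime_dvd a b u hu0 hu1 hrec p hp hpd
  | succ k ih =>
    obtain ⟨n, hn⟩ : ∃ n, p = n + 1 := ⟨p - 1, by have := hp.pos; omega⟩
    obtain ⟨⟨t, ht⟩, -⟩ := lucas_mul a b u hu0 hu1 hrec (p ^ (k + 1)) n
    have hc : ((n : ℤ) + 1) = (p : ℤ) := by rw [hn]; push_cast; ring
    rw [← hn, hc] at ht
    rw [pow_succ' p (k + 1), ht]
    obtain ⟨c, hcc⟩ := ih
    rw [hcc]
    refine dvd_add ⟨c * u (p ^ (k + 1) + 1) ^ n, by ring⟩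
      ⟨(p : ℤ) ^ k * c ^ 2 * t, by ring⟩

/-- Suppose `Δᵤ ≠ 1` and let `p` be the least prime divisor of `Δᵤ`.
Then for every real `x ≥ 1`, `x/p ≤ max{g_u(n) : 1 ≤ n ≤ x} ≤ x`, expressed by saying that
some `n ≤ x` achieves `g_u(n) ≥ x/p` while every `n ≤ x` satisfies `g_u(n) ≤ x`. -/
theorem statement9 (a₁ a₂ : ℤ) (hcop : IsCoprime a₁ a₂) (ha₂ : a₂ ≠ 0)
    (hΔ : a₁ ^ 2 + 4 * a₂ ≠ 0)
    (u : ℕ → ℤ) (hu0 : u 0 = 0) (hu1 : u 1 = 1)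
    (hrec : ∀ n : ℕ, u (n + 2) = a₁ * u (n + 1) + a₂ * u n)
    (hnd : ∀ α β : ℂ, α ^ 2 = (a₁ : ℂ) * α + (a₂ : ℂ) →
      β ^ 2 = (a₁ : ℂ) * β + (a₂ : ℂ) → α ≠ β → ∀ k : ℕ, 0 < k → (α / β) ^ k ≠ 1)
    (hΔ1 : a₁ ^ 2 + 4 * a₂ ≠ 1)
    (p : ℕ) (hp : p.Prime) (hpd : (p : ℤ) ∣ a₁ ^ 2 + 4 * a₂)
    (hpmin : ∀ r : ℕ, r.Prime → (r : ℤ) ∣ a₁ ^ 2 + 4 * a₂ → p ≤ r) :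
    ∀ x : ℝ, 1 ≤ x →
      (∃ n : ℕ, 0 < n ∧ (n : ℝ) ≤ x ∧ x / (p : ℝ) ≤ (gu u n : ℝ)) ∧
      (∀ n : ℕ, 0 < n → (n : ℝ) ≤ x → (gu u n : ℝ) ≤ x) := by
  intro x hx
  have hp1 : 1 < p := hp.one_lt
  have hp0 : (0 : ℝ) < p := by exact_mod_cast hp.pos
  refine ⟨?_, ?_⟩
  · have hf : ⌊x⌋₊ ≠ 0 := by
      have : 1 ≤ ⌊x⌋₊ := Nat.le_floor (by simpa using hx)
      omega
    have hle : p ^ Nat.log p ⌊x⌋₊ ≤ ⌊x⌋₊ := Nat.pow_log_le_self p hf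
    have hlt : ⌊x⌋₊ < p ^ (Nat.log p ⌊x⌋₊ + 1) := Nat.lt_pow_succ_log_self hp1 _
    generalize Nat.log p ⌊x⌋₊ = k at hle hlt
    have hxlt : x < ((p ^ (k + 1) : ℕ) : ℝ) := (Nat.floor_lt (by linarith)).mp hlt
    have hg : gu u (p ^ k) = p ^ k := by
      have hd : ((p ^ k : ℕ) : ℤ) ∣ u (p ^ k) := by
        cases k with
        | zero => simp
        | succ k =>
          have := lucas_pow_dvd a₁ a₂ u hu0 hu1 hrec p hp hpd k
          push_cast
          exact this
      unfold gu
      exact Int.ofNat_inj.mp (Int.gcd_eq_left (Int.natCast_nonneg _) hd)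
    refine ⟨p ^ k, pow_pos hp.pos k, (Nat.le_floor_iff (by linarith)).mp hle, ?_⟩
    rw [hg, div_le_iff₀ hp0]
    push_cast at hxlt ⊢
    rw [← pow_succ]
    exact hxlt.le
  · intro n hn hnx
    refine le_trans ?_ hnx
    have : gu u n ∣ n := by
      unfold gu
      exact Int.natCast_dvd_natCast.mp (Int.gcd_dvd_left _ _)
    exact_mod_cast Nat.le_of_dvd hn this
end
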